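/- arXiv:2305.18186 — 2 statements merged into one kernel-verified Lean document; each statement's English description precedes it below -/
import Mathlib

section
/- For every x ∈ ℝ² one has |A_𝓜 x| = [(q^{1/2} − q^{−1/2})² + 4 sin²(θ/2)]^{−1/2} |A x|, and for every k ∈ ℝ² one has |B_𝓜 k| = [(q^{1/2} − q^{−1/2})² + 4 sin²(θ/2)]^{1/2} |2π A^{−T} k|. -/
open scoped Real BigOperators
open MeasureTheory Filter Topology Matrix

noncomputable section

/-- The 2×2 rotation matrix through angle `φ`. -/
def Rot (φ : ℝ) : Matrix (Fin 2) (Fin 2) ℝ :=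
  !![Real.cos φ, -Real.sin φ; Real.sin φ, Real.cos φ]

/-- Euclidean norm on `ℝ²`. -/
def norm2 (v : Fin 2 → ℝ) : ℝ := Real.sqrt (v 0 ^ 2 + v 1 ^ 2)

/-- Euclidean norm on `ℝ³`. -/
def norm3 (v : Fin 3 → ℝ) : ℝ := Real.sqrt (v 0 ^ 2 + v 1 ^ 2 + v 2 ^ 2)

/-- Cast an integer vector to a real vector. -/
def iv (n : Fin 2 → ℤ) : Fin 2 → ℝ := fun i => (n i : ℝ)

/-- The lattice `M ℤ²`. -/
def lat (M : Matrix (Fin 2) (Fin 2) ℝ) : Set (Fin 2 → ℝ) :=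
  {v | ∃ n : Fin 2 → ℤ, v = M.mulVec (iv n)}

/-- The unit cell `M [0,1)²`. -/
def cell (M : Matrix (Fin 2) (Fin 2) ℝ) : Set (Fin 2 → ℝ) :=
  {v | ∃ t : Fin 2 → ℝ, (∀ i, t i ∈ Set.Ico (0 : ℝ) 1) ∧ v = M.mulVec t}

/-- The reciprocal matrix `2π M⁻ᵀ`. -/
def recip (M : Matrix (Fin 2) (Fin 2) ℝ) : Matrix (Fin 2) (Fin 2) ℝ :=
  (2 * π) • (M⁻¹)ᵀ

/-- A pair of lattices with reciprocal-lattice matrices `B1`, `B2` is incommensurate iff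
`G₁ + G₂ = 0` with `G_k` in the respective reciprocal lattice implies `G₁ = G₂ = 0`. -/
def Incommensurate (B1 B2 : Matrix (Fin 2) (Fin 2) ℝ) : Prop :=
  ∀ G1 ∈ lat B1, ∀ G2 ∈ lat B2, G1 + G2 = 0 → G1 = 0 ∧ G2 = 0

/-- Euclidean distance from `v ∈ ℝ²` to the integer lattice `ℤ²`. -/
def distZ2 (v : Fin 2 → ℝ) : ℝ := ⨅ m : Fin 2 → ℤ, norm2 (v - iv m)

/-- `θ` is a `(q,K,σ)`-Diophantine 2D rotation. -/
def IsDiophantine (A : Matrix (Fin 2) (Fin 2) ℝ) (q K σ θ : ℝ) : Prop :=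
  ∀ n : Fin 2 → ℤ, n ≠ 0 →
    K / norm2 (iv n) ^ (2 * σ) ≤ distZ2 ((q • (Aᵀ * Rot θ * (A⁻¹)ᵀ)).mulVec (iv n)) ∧
    K / norm2 (iv n) ^ (2 * σ) ≤ distZ2 ((q⁻¹ • (Aᵀ * Rot (-θ) * (A⁻¹)ᵀ)).mulVec (iv n))

/-- The moiré length scale ratio `ρ_𝓜`. -/
def rhoM (q θ : ℝ) : ℝ :=
  (Real.sqrt ((Real.sqrt q - (Real.sqrt q)⁻¹) ^ 2 + 4 * Real.sin (θ / 2) ^ 2))⁻¹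

/-- Riemann zeta function (for real `s > 1`, via its Dirichlet series). -/
def zetaR (s : ℝ) : ℝ := ∑' n : ℕ, ((n : ℝ) + 1) ^ (-s)

/-- Operator (spectral) norm of a 2×2 real matrix w.r.t. the Euclidean norm. -/
def opNorm2 (M : Matrix (Fin 2) (Fin 2) ℝ) : ℝ :=
  ⨆ x : {x : Fin 2 → ℝ // norm2 x ≤ 1}, norm2 (M.mulVec x.1)

/-- Embedding `ℝ² ↪ ℝ³`, `x ↦ (x, 0)`. -/
def emb (x : Fin 2 → ℝ) : Fin 3 → ℝ := ![x 0, x 1, 0]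

/-- Japanese bracket `⟨x⟩ = (1 + |x|²)^{1/2}` on `ℝ³`. -/
def jap3 (x : Fin 3 → ℝ) : ℝ := Real.sqrt (1 + norm3 x ^ 2)

/-- The region `ℝ² × [−L, L] ⊆ ℝ³`. -/
def slab (L : ℝ) : Set (Fin 3 → ℝ) := {x | x 2 ∈ Set.Icc (-L) L}

/-- Euclidean inner product on `ℝ²`. -/
def dot2 (a b : Fin 2 → ℝ) : ℝ := ∑ i, a i * b i

/-- The index box `⟦−N, N⟧²`. -/
def box (N : ℕ) : Finset (Fin 2 → ℤ) :=
  Finset.Icc (fun _ => -(N : ℤ)) (fun _ => (N : ℤ))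

/-- The normalized Dirichlet kernel `Δ_N^j` of the lattice `A_j ℤ²`. -/
def Dir (Aj : Matrix (Fin 2) (Fin 2) ℝ) (N : ℕ) (G : Fin 2 → ℝ) : ℂ :=
  (((2 * N + 1 : ℝ)) ^ 2)⁻¹ •
    ∑ n ∈ box N, Complex.exp (Complex.I * (dot2 G (Aj.mulVec (iv n)) : ℝ))

/-- Conformal matrices scale the Euclidean norm. -/
lemma norm2_conf (a b : ℝ) (v : Fin 2 → ℝ) :
    norm2 ((!![a, b; -b, a] : Matrix (Fin 2) (Fin 2) ℝ).mulVec v)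
      = Real.sqrt (a ^ 2 + b ^ 2) * norm2 v := by
  unfold norm2
  rw [← Real.sqrt_mul (by positivity)]
  congr 1
  simp [Matrix.mulVec, dotProduct, Fin.sum_univ_two]
  ring

/-- Inverse transpose of a conformal matrix. -/
lemma conf_inv (a b : ℝ) (h : a ^ 2 + b ^ 2 ≠ 0) :
    ((!![a, b; -b, a] : Matrix (Fin 2) (Fin 2) ℝ)⁻¹)ᵀ
      = !![a / (a ^ 2 + b ^ 2), b / (a ^ 2 + b ^ 2);
          -(b / (a ^ 2 + b ^ 2)), a / (a ^ 2 + b ^ 2)] := by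
  rw [Matrix.inv_eq_right_inv (B := !![a / (a ^ 2 + b ^ 2), -(b / (a ^ 2 + b ^ 2));
          b / (a ^ 2 + b ^ 2), a / (a ^ 2 + b ^ 2)])]
  · ext i j
    fin_cases i <;> fin_cases j <;> simp
  · ext i j
    fin_cases i <;> fin_cases j <;> simp [Matrix.mul_apply, Fin.sum_univ_two] <;>
      field_simp <;> ring

lemma recip_mul (P A : Matrix (Fin 2) (Fin 2) ℝ) :
    recip (P * A) = (P⁻¹)ᵀ * recip A := by
  simp [recip, Matrix.mul_inv_rev, Matrix.transpose_mul]

lemma smul_rot (t φ : ℝ) : t • Rot φ =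
    !![t * Real.cos φ, -(t * Real.sin φ); -(-(t * Real.sin φ)), t * Real.cos φ] := by
  ext i j
  fin_cases i <;> fin_cases j <;> simp [Rot]

lemma smul_rot_inv (t φ : ℝ) (ht : t ≠ 0) : ((t • Rot φ)⁻¹)ᵀ = t⁻¹ • Rot φ := by
  have h : (t * Real.cos φ) ^ 2 + (-(t * Real.sin φ)) ^ 2 = t ^ 2 := by
    linear_combination t ^ 2 * Real.sin_sq_add_cos_sq φ
  rw [smul_rot, conf_inv _ _ (by rw [h]; positivity), h, smul_rot]
  ext i j
  fin_cases i <;> fin_cases j <;> simp <;> field_simp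

lemma recip_recip (A : Matrix (Fin 2) (Fin 2) ℝ) (hA : IsUnit A.det) :
    recip (recip A) = A := by
  have hp : (2 * π) ≠ 0 := by positivity
  have h : ((2 * π) • (A⁻¹)ᵀ)⁻¹ = (2 * π)⁻¹ • Aᵀ := by
    apply Matrix.inv_eq_right_inv
    rw [Matrix.smul_mul, Matrix.mul_smul, smul_smul, mul_inv_cancel₀ hp, one_smul,
      ← Matrix.transpose_mul, Matrix.mul_nonsing_inv _ hA, Matrix.transpose_one]
  unfold recip
  rw [h, Matrix.transpose_smul, Matrix.transpose_transpose, smul_smul, mul_inv_cancel₀ hp,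
    one_smul]

/-- Lemma: Moiré length scale. -/
theorem moire_length_scale (θ q : ℝ) (hq : 0 < q)
    (A A1 A2 B1 B2 BM AM : Matrix (Fin 2) (Fin 2) ℝ)
    (hA : IsUnit A.det)
    (hA1 : A1 = (Real.sqrt q)⁻¹ • (Rot (-(θ / 2)) * A))
    (hA2 : A2 = Real.sqrt q • (Rot (θ / 2) * A))
    (hB1 : B1 = recip A1) (hB2 : B2 = recip A2)
    (hBM : BM = B1 - B2) (hBMinv : IsUnit BM.det)
    (hAM : AM = recip BM) :
    (∀ x : Fin 2 → ℝ, norm2 (AM.mulVec x) = rhoM q θ * norm2 (A.mulVec x)) ∧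
    (∀ k : Fin 2 → ℝ, norm2 (BM.mulVec k) = (rhoM q θ)⁻¹ * norm2 ((recip A).mulVec k)) := by
  have hs : Real.sqrt q ≠ 0 := (Real.sqrt_pos.2 hq).ne'
  obtain ⟨a, ha⟩ : ∃ a, a = (Real.sqrt q - (Real.sqrt q)⁻¹) * Real.cos (θ / 2) := ⟨_, rfl⟩
  obtain ⟨b, hb⟩ : ∃ b, b = (Real.sqrt q + (Real.sqrt q)⁻¹) * Real.sin (θ / 2) := ⟨_, rfl⟩
  have hD : (Real.sqrt q - (Real.sqrt q)⁻¹) ^ 2 + 4 * Real.sin (θ / 2) ^ 2 = a ^ 2 + b ^ 2 := by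
    have h1 : Real.sqrt q * (Real.sqrt q)⁻¹ = 1 := mul_inv_cancel₀ hs
    rw [ha, hb]
    linear_combination (-(Real.sqrt q - (Real.sqrt q)⁻¹) ^ 2) * Real.sin_sq_add_cos_sq (θ / 2)
      - 4 * Real.sin (θ / 2) ^ 2 * h1
  have hBM' : BM = !![a, b; -b, a] * recip A := by
    rw [hBM, hB1, hB2, hA1, hA2, ← Matrix.smul_mul, ← Matrix.smul_mul, recip_mul, recip_mul,
      smul_rot_inv _ _ hs, smul_rot_inv _ _ (inv_ne_zero hs), inv_inv, ← Matrix.sub_mul]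
    congr 1
    ext i j
    fin_cases i <;> fin_cases j <;> simp [Rot, ha, hb] <;> ring
  have hne : a ^ 2 + b ^ 2 ≠ 0 := by
    intro h0
    apply hBMinv.ne_zero
    rw [hBM', Matrix.det_mul, Matrix.det_fin_two_of]
    linear_combination (recip A).det * h0
  have hr : rhoM q θ = (Real.sqrt (a ^ 2 + b ^ 2))⁻¹ := by rw [rhoM, hD]
  constructor
  · intro x
    have hAM' : AM = ((!![a, b; -b, a] : Matrix (Fin 2) (Fin 2) ℝ)⁻¹)ᵀ * A := by
      rw [hAM, hBM', recip_mul, recip_recip A hA]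
    rw [hAM', conf_inv a b hne, ← Matrix.mulVec_mulVec, norm2_conf, hr, ← Real.sqrt_inv]
    congr 2
    field_simp
  · intro k
    rw [hBM', ← Matrix.mulVec_mulVec, norm2_conf, hr, inv_inv]

end
end

section
/- If the pair (𝓡₁, 𝓡₂) is incommensurate, then for each j ∈ {1,2} the pair (𝓡_j, 𝓡_𝓜) is incommensurate; that is, if G_𝓜 + G_j = 0 with G_𝓜 ∈ 𝓡_𝓜* and G_j ∈ 𝓡_j*, then G_𝓜 = G_j = 0. Analogously, if (𝓡₁*, 𝓡₂*) is incommensurate, then (𝓡_j*, 𝓡_𝓜*) is incommensurate for each j ∈ {1,2}. -/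
open scoped Real BigOperators
open MeasureTheory Filter Topology Matrix

noncomputable section

theorem iv_add' (m n : Fin 2 → ℤ) : iv (m + n) = iv m + iv n := by
  ext i; simp [iv]

theorem iv_neg' (m : Fin 2 → ℤ) : iv (-m) = -iv m := by
  ext i; simp [iv]

theorem det_Rot' (φ : ℝ) : (Rot φ).det = 1 := by
  have := Real.sin_sq_add_cos_sq φ
  simp only [Rot, Matrix.det_fin_two_of]
  linarith

theorem det_recip_ne' (M : Matrix (Fin 2) (Fin 2) ℝ) (h : M.det ≠ 0) : (recip M).det ≠ 0 := by
  have : (2 * π) ≠ 0 := by positivity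
  simp [recip, Matrix.det_nonsing_inv, h, Real.pi_ne_zero]

/-- Remark: incommensurability of layer and moiré lattices. -/
theorem layer_moire_incommensurate (θ q : ℝ) (hq : 0 < q)
    (A A1 A2 B1 B2 BM AM : Matrix (Fin 2) (Fin 2) ℝ)
    (hA : IsUnit A.det)
    (hA1 : A1 = (Real.sqrt q)⁻¹ • (Rot (-(θ / 2)) * A))
    (hA2 : A2 = Real.sqrt q • (Rot (θ / 2) * A))
    (hB1 : B1 = recip A1) (hB2 : B2 = recip A2)
    (hBM : BM = B1 - B2) (hBMinv : IsUnit BM.det)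
    (hAM : AM = recip BM) :
    (Incommensurate B1 B2 → Incommensurate BM B1 ∧ Incommensurate BM B2) ∧
    (Incommensurate A1 A2 → Incommensurate AM A1 ∧ Incommensurate AM A2) := by
  have hs : Real.sqrt q ≠ 0 := (Real.sqrt_pos.mpr hq).ne'
  have hA0 : A.det ≠ 0 := hA.ne_zero
  have d1 : A1.det ≠ 0 := by
    rw [hA1, Matrix.det_smul, Matrix.det_mul, det_Rot']
    simp [hs, hA0]
  have d2 : A2.det ≠ 0 := by
    rw [hA2, Matrix.det_smul, Matrix.det_mul, det_Rot']
    simp [hs, hA0]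
  have e1 : B1.det ≠ 0 := hB1 ▸ det_recip_ne' A1 d1
  have e2 : B2.det ≠ 0 := hB2 ▸ det_recip_ne' A2 d2
  have hC : (A1⁻¹ - A2⁻¹) * AM = 1 := by
    have h1 : BMᵀ = (2 * π) • (A1⁻¹ - A2⁻¹) := by
      rw [hBM, hB1, hB2, recip, recip, ← smul_sub, Matrix.transpose_smul, Matrix.transpose_sub,
        Matrix.transpose_transpose, Matrix.transpose_transpose]
    rw [hAM, recip, Matrix.mul_smul, ← Matrix.smul_mul, ← h1, ← Matrix.transpose_mul,
      Matrix.nonsing_inv_mul _ hBMinv, Matrix.transpose_one]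
  have key : ∀ n : Fin 2 → ℤ,
      A1⁻¹ *ᵥ (AM *ᵥ iv n) - A2⁻¹ *ᵥ (AM *ᵥ iv n) = iv n := by
    intro n
    rw [← Matrix.sub_mulVec, Matrix.mulVec_mulVec, hC, Matrix.one_mulVec]
  have i1 : ∀ v, A1⁻¹ *ᵥ (A1 *ᵥ v) = v := fun v => by
    rw [Matrix.mulVec_mulVec, Matrix.nonsing_inv_mul _ d1.isUnit, Matrix.one_mulVec]
  have i2 : ∀ v, A2⁻¹ *ᵥ (A2 *ᵥ v) = v := fun v => by
    rw [Matrix.mulVec_mulVec, Matrix.nonsing_inv_mul _ d2.isUnit, Matrix.one_mulVec]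
  have j1 : ∀ v, A1 *ᵥ (A1⁻¹ *ᵥ v) = v := fun v => by
    rw [Matrix.mulVec_mulVec, Matrix.mul_nonsing_inv _ d1.isUnit, Matrix.one_mulVec]
  have j2 : ∀ v, A2 *ᵥ (A2⁻¹ *ᵥ v) = v := fun v => by
    rw [Matrix.mulVec_mulVec, Matrix.mul_nonsing_inv _ d2.isUnit, Matrix.one_mulVec]
  refine ⟨fun H => ⟨?_, ?_⟩, fun H => ⟨?_, ?_⟩⟩
  · rintro _ ⟨n, rfl⟩ _ ⟨m, rfl⟩ h
    have h2 := (H _ ⟨n + m, rfl⟩ _ ⟨-n, rfl⟩ (by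
      rw [← h, hBM, iv_add', iv_neg', Matrix.mulVec_add, Matrix.mulVec_neg, Matrix.sub_mulVec]
      abel)).2
    have h3 : iv n = 0 := by
      have := Matrix.eq_zero_of_mulVec_eq_zero e2 h2
      rwa [iv_neg', neg_eq_zero] at this
    rw [h3, Matrix.mulVec_zero, zero_add] at h
    exact ⟨by rw [h3, Matrix.mulVec_zero], h⟩
  · rintro _ ⟨n, rfl⟩ _ ⟨m, rfl⟩ h
    have h2 := (H _ ⟨n, rfl⟩ _ ⟨m + -n, rfl⟩ (by
      rw [← h, hBM, iv_add', iv_neg', Matrix.mulVec_add, Matrix.mulVec_neg, Matrix.sub_mulVec]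
      abel)).1
    have h3 : iv n = 0 := Matrix.eq_zero_of_mulVec_eq_zero e1 h2
    rw [h3, Matrix.mulVec_zero, zero_add] at h
    exact ⟨by rw [h3, Matrix.mulVec_zero], h⟩
  · rintro _ ⟨n, rfl⟩ _ ⟨m, rfl⟩ h
    have hv : AM *ᵥ iv n = -(A1 *ᵥ iv m) := eq_neg_of_add_eq_zero_left h
    have k := key n
    have hk : A1⁻¹ *ᵥ (AM *ᵥ iv n) = -iv m := by rw [hv, Matrix.mulVec_neg, i1]
    rw [hk] at k
    have hk2 : A2⁻¹ *ᵥ (AM *ᵥ iv n) = iv (-(m + n)) := by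
      rw [iv_neg', iv_add']; linear_combination -k
    have h2 : A2 *ᵥ iv (-(m + n)) = AM *ᵥ iv n := by rw [← hk2, j2]
    have := H _ ⟨m, rfl⟩ _ ⟨-(m + n), rfl⟩ (by rw [h2, hv]; abel)
    exact ⟨h2 ▸ this.2, this.1⟩
  · rintro _ ⟨n, rfl⟩ _ ⟨m, rfl⟩ h
    have hv : AM *ᵥ iv n = -(A2 *ᵥ iv m) := eq_neg_of_add_eq_zero_left h
    have k := key n
    have hk : A2⁻¹ *ᵥ (AM *ᵥ iv n) = -iv m := by rw [hv, Matrix.mulVec_neg, i2]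
    rw [hk] at k
    have hk2 : A1⁻¹ *ᵥ (AM *ᵥ iv n) = iv (n + -m) := by
      rw [iv_add', iv_neg']; linear_combination k
    have h2 : A1 *ᵥ iv (n + -m) = AM *ᵥ iv n := by rw [← hk2, j1]
    have := H _ ⟨n + -m, rfl⟩ _ ⟨m, rfl⟩ (by rw [h2, hv]; abel)
    exact ⟨h2 ▸ this.1, this.2⟩

end
end
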